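/- arXiv:1312.7729 — 2 statements merged into one kernel-verified Lean document; each statement's English description precedes it below -/
import Mathlib

section
/- For real q with 0<q<1, a positive integer r, a Dirichlet character χ of odd conductor d, a nonnegative integer n, and real numbers x and y, the addition formula E^{(r)}_{n,χ,q}(x+y) = Σ_{i=0}^{n} C(n,i) q^{x·i} E^{(r)}_{i,χ,q}(y) [x]_q^{n-i} holds, where C(n,i) is the binomial coefficient. -/
open scoped BigOperators

/-- The `q`-number `[x]_q = (1 - q^x)/(1 - q)` for real `q` and real `x`. -/
noncomputable def qNum (q x : ℝ) : ℝ := (1 - q ^ x) / (1 - q)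

/-- Generalized `q`-Euler polynomial of order `r` attached to a Dirichlet character `χ`:
`E^{(r)}_{n,χ,q}(x) = [2]_q^r Σ' (-q)^{m₁+⋯+m_r} (Π χ(mᵢ)) [m₁+⋯+m_r+x]_q^n`. -/
noncomputable def qEuler (r : ℕ) {d : ℕ} (χ : DirichletCharacter ℂ d) (q : ℝ)
    (n : ℕ) (x : ℝ) : ℂ :=
  ((qNum q 2 : ℝ) : ℂ) ^ r *
    ∑' m : Fin r → ℕ,
      ((-(q : ℂ)) ^ (∑ i, m i) * (∏ i, χ ((m i : ZMod d))) *
        ((qNum q ((∑ i, m i : ℕ) + x) : ℝ) : ℂ) ^ n)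

/-- Dirichlet-type multiple `q`-`l`-function
`l_{q,r}(s,x|χ) = [2]_q^r Σ' (-q)^{m₁+⋯+m_r} (Π χ(mᵢ)) [m₁+⋯+m_r+x]_q^{-s}`,
with principal complex powers of positive real bases. -/
noncomputable def qL (q : ℝ) (r : ℕ) {d : ℕ} (χ : DirichletCharacter ℂ d)
    (s : ℂ) (x : ℝ) : ℂ :=
  ((qNum q 2 : ℝ) : ℂ) ^ r *
    ∑' m : Fin r → ℕ,
      ((-(q : ℂ)) ^ (∑ i, m i) * (∏ i, χ ((m i : ZMod d))) *
        ((qNum q ((∑ i, m i : ℕ) + x) : ℝ) : ℂ) ^ (-s))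

/-- The `q`-power sum
`S^{(r)}_{n,i,q}(a|χ) = Σ_{j₁,…,j_r=0}^{a-1} (-1)^{j₁+⋯+j_r} (Π χ(j_l)) q^{(j₁+⋯+j_r)(n-i+1)} [j₁+⋯+j_r]_q^i`. -/
noncomputable def qS (r : ℕ) {d : ℕ} (χ : DirichletCharacter ℂ d)
    (n i : ℕ) (q : ℝ) (a : ℕ) : ℂ :=
  ∑ j ∈ Fintype.piFinset (fun _ : Fin r => Finset.range a),
    ((-1 : ℂ) ^ (∑ l, j l) * (∏ l, χ ((j l : ZMod d))) *
      (q : ℂ) ^ ((∑ l, j l) * (n - i + 1)) *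
      ((qNum q ((∑ l, j l : ℕ)) : ℝ) : ℂ) ^ i)

/-!
The cocycle identity `[x + y]_q = [x]_q + q ^ x [y]_q` and the binomial theorem expand
`[x + a]_q ^ n` in powers of `[a]_q`. For `0 < q < 1` the values `[a]_q` are bounded as `a` ranges
over any set that is bounded below, so the expansion may be summed termwise against any summable
weight, in particular against `(-q) ^ (m₁ + ⋯ + m_r) χ(m₁) ⋯ χ(m_r)`, which is a product of
`r` geometrically decaying factors.
-/

theorem summable_norm_prod_of_summable_norm {R : Type*} [NormedCommRing R] {r : ℕ}
    {κ : Fin r → Type*} {f : ∀ i, κ i → R} (hf : ∀ i, Summable fun k => ‖f i k‖) :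
    Summable fun m : ∀ i, κ i => ‖∏ i, f i (m i)‖ := by
  induction r with
  | zero => exact Summable.of_finite
  | succ r ih =>
    rw [← (Fin.consEquiv κ).summable_iff]
    refine ((hf 0).mul_norm (ih fun i => hf i.succ)).congr fun p => ?_
    simp [Fin.consEquiv, Fin.prod_univ_succ]

theorem summable_norm_pow_mul_dirichletCharacter {z : ℂ} (hz : ‖z‖ < 1) {d : ℕ}
    (χ : DirichletCharacter ℂ d) : Summable fun k : ℕ => ‖z ^ k * χ k‖ := by
  refine (summable_norm_geometric_of_norm_lt_one hz).of_nonneg_of_le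
    (fun _ => norm_nonneg _) fun k => ?_
  rw [norm_mul]
  exact mul_le_of_le_one_right (norm_nonneg _) (χ.norm_le_one _)

theorem summable_pow_sum_mul_prod_dirichletCharacter {z : ℂ} (hz : ‖z‖ < 1) (r : ℕ) {d : ℕ}
    (χ : DirichletCharacter ℂ d) :
    Summable fun m : Fin r → ℕ => z ^ (∑ i, m i) * ∏ i, χ (m i) := by
  simp only [← Finset.prod_pow_eq_pow_sum, ← Finset.prod_mul_distrib]
  exact (summable_norm_prod_of_summable_norm fun _ : Fin r =>
    summable_norm_pow_mul_dirichletCharacter hz χ).of_norm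

section qNum

variable {q : ℝ}

theorem qNum_add (hq0 : 0 < q) (x y : ℝ) : qNum q (x + y) = q ^ x * qNum q y + qNum q x := by
  unfold qNum
  rw [Real.rpow_add hq0]
  ring

theorem qNum_add_pow (hq0 : 0 < q) (x y : ℝ) (n : ℕ) :
    qNum q (x + y) ^ n =
      ∑ i ∈ Finset.range (n + 1),
        (n.choose i : ℝ) * q ^ (x * (i : ℝ)) * qNum q x ^ (n - i) * qNum q y ^ i := by
  rw [qNum_add hq0, add_pow]
  refine Finset.sum_congr rfl fun i _ => ?_
  rw [Real.rpow_mul_natCast hq0.le, mul_pow]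
  ring

theorem abs_qNum_le (hq0 : 0 < q) (hq1 : q < 1) {c x : ℝ} (hcx : c ≤ x) :
    |qNum q x| ≤ (1 + q ^ c) / (1 - q) := by
  have one_sub_pos : 0 < 1 - q := sub_pos.2 hq1
  have rpow_nonneg : 0 ≤ q ^ x := Real.rpow_nonneg hq0.le x
  have rpow_le : q ^ x ≤ q ^ c := Real.rpow_le_rpow_of_exponent_ge hq0 hq1.le hcx
  rw [qNum, abs_div, abs_of_pos one_sub_pos]
  gcongr
  exact abs_le.2 ⟨by linarith, by linarith⟩

variable {ι : Type*} {w : ι → ℂ} {a : ι → ℝ}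

theorem summable_mul_qNum_pow (hq0 : 0 < q) (hq1 : q < 1) (hw : Summable w)
    (ha : BddBelow (Set.range a)) (n : ℕ) :
    Summable fun m => w m * (qNum q (a m) : ℂ) ^ n := by
  obtain ⟨c, hc⟩ := ha
  refine (hw.norm.mul_right (((1 + q ^ c) / (1 - q)) ^ n)).of_norm_bounded fun m => ?_
  rw [norm_mul, norm_pow, Complex.norm_real, Real.norm_eq_abs]
  gcongr
  exact abs_qNum_le hq0 hq1 (hc ⟨m, rfl⟩)

theorem tsum_mul_qNum_add_pow (hq0 : 0 < q) (hq1 : q < 1) (hw : Summable w)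
    (ha : BddBelow (Set.range a)) (x : ℝ) (n : ℕ) :
    ∑' m, w m * (qNum q (x + a m) : ℂ) ^ n =
      ∑ i ∈ Finset.range (n + 1), (n.choose i : ℂ) * ((q ^ (x * (i : ℝ)) : ℝ) : ℂ) *
        (qNum q x : ℂ) ^ (n - i) * ∑' m, w m * (qNum q (a m) : ℂ) ^ i := by
  have expand (m : ι) : w m * (qNum q (x + a m) : ℂ) ^ n =
      ∑ i ∈ Finset.range (n + 1), (n.choose i : ℂ) * ((q ^ (x * (i : ℝ)) : ℝ) : ℂ) *
        (qNum q x : ℂ) ^ (n - i) * (w m * (qNum q (a m) : ℂ) ^ i) := by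
    rw [← Complex.ofReal_pow, qNum_add_pow hq0, Complex.ofReal_sum, Finset.mul_sum]
    refine Finset.sum_congr rfl fun i _ => ?_
    push_cast
    ring
  simp_rw [expand, ← tsum_mul_left]
  exact Summable.tsum_finsetSum fun i _ => (summable_mul_qNum_pow hq0 hq1 hw ha i).mul_left _

end qNum

theorem qEuler_add_general {q : ℝ} (hq0 : 0 < q) (hq1 : q < 1) (r : ℕ) {d : ℕ}
    (χ : DirichletCharacter ℂ d) (n : ℕ) (x y : ℝ) :
    qEuler r χ q n (x + y) =
      ∑ i ∈ Finset.range (n + 1),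
        ((n.choose i : ℂ) * ((q ^ (x * (i : ℝ)) : ℝ) : ℂ) * qEuler r χ q i y *
          ((qNum q x : ℝ) : ℂ) ^ (n - i)) := by
  have norm_neg_q_lt_one : ‖-(q : ℂ)‖ < 1 := by
    rwa [norm_neg, Complex.norm_real, Real.norm_of_nonneg hq0.le]
  have summable_weight := summable_pow_sum_mul_prod_dirichletCharacter norm_neg_q_lt_one r χ
  have bddBelow_shift : BddBelow (Set.range fun m : Fin r → ℕ => ((∑ i, m i : ℕ) : ℝ) + y) :=
    ⟨y, Set.forall_mem_range.2 fun _ => le_add_of_nonneg_left (Nat.cast_nonneg _)⟩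
  simp only [qEuler, add_left_comm _ x y]
  rw [tsum_mul_qNum_add_pow hq0 hq1 summable_weight bddBelow_shift, Finset.mul_sum]
  exact Finset.sum_congr rfl fun i _ => by ring

/-- Equation (9): addition formula for the generalized `q`-Euler polynomials. -/
theorem qEuler_add (q : ℝ) (hq0 : 0 < q) (hq1 : q < 1)
    (r : ℕ) (hr : 0 < r) (d : ℕ) (hd : Odd d) (χ : DirichletCharacter ℂ d)
    (n : ℕ) (x y : ℝ) :
    qEuler r χ q n (x + y) =
      ∑ i ∈ Finset.range (n + 1),
        ((n.choose i : ℂ) * ((q ^ (x * (i : ℝ)) : ℝ) : ℂ) * qEuler r χ q i y *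
          ((qNum q x : ℝ) : ℂ) ^ (n - i)) :=
  qEuler_add_general hq0 hq1 r χ n x y
end

section
/- For odd positive integers a and b, real q with 0<q<1, real x>0, a complex number s, a positive integer r, a Dirichlet character χ of odd conductor d, and nonnegative integers j_1,...,j_r: (1/[2]_{q^a}^r) · l_{q^a,r}(s, bx + (b/a)(j_1+⋯+j_r) | χ) = [a]_q^s · Σ_{n_1,...,n_r=0}^∞ Σ_{i_1,...,i_r=0}^{db-1} (-1)^{Σ_l(i_l+n_l)} q^{a·Σ_l(i_l+b·d·n_l)} (Π_{l=1}^r χ(i_l)) · [ab(x + d·Σ_l n_l) + b·Σ_l j_l + a·Σ_l i_l]_q^{-s}, where all complex powers of positive reals are principal. -/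
/-!
Write each summation index as `D * n + i` with `D = d * b` and `0 ≤ i < D`; absolute convergence
allows this regrouping of the series. Since `d ∣ D`, the character only sees `i`, and since `D` is
odd, `(-1) ^ (D * n + i) = (-1) ^ (i + n)`. The scaling rule `[a * y]_q = [a]_q * [y]_{q ^ a}` then
moves the base from `q ^ a` to `q`, at the cost of the factor `[a]_q ^ s`.
-/

open scoped BigOperators

section Summation

variable {ι : Type*} [Fintype ι]

theorem summable_pi_prod_of_nonneg {κ : ι → Type*} {f : ∀ i, κ i → ℝ}
    (hf_nonneg : ∀ i k, 0 ≤ f i k) (hf : ∀ i, Summable (f i)) :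
    Summable fun m : ∀ i, κ i => ∏ i, f i (m i) := by
  classical
  refine summable_of_sum_le (c := ∏ i, ∑' k, f i k)
    (fun m => Finset.prod_nonneg fun i _ => hf_nonneg i (m i)) fun u => ?_
  have hu : u ⊆ Fintype.piFinset fun i => u.image fun m => m i := fun m hm =>
    Fintype.mem_piFinset.2 fun i => Finset.mem_image_of_mem (fun m : ∀ i, κ i => m i) hm
  calc ∑ m ∈ u, ∏ i, f i (m i)
      ≤ ∑ m ∈ Fintype.piFinset fun i => u.image fun m => m i, ∏ i, f i (m i) :=
        Finset.sum_le_sum_of_subset_of_nonneg hu fun m _ _ =>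
          Finset.prod_nonneg fun i _ => hf_nonneg i (m i)
    _ = ∏ i, ∑ k ∈ u.image fun m => m i, f i k := (Finset.prod_univ_sum _ _).symm
    _ ≤ ∏ i, ∑' k, f i k :=
        Finset.prod_le_prod (fun i _ => Finset.sum_nonneg fun k _ => hf_nonneg i k)
          fun i _ => (hf i).sum_le_tsum _ fun k _ => hf_nonneg i k

theorem summable_pow_sum {q : ℝ} (hq0 : 0 ≤ q) (hq1 : q < 1) :
    Summable fun m : ι → ℕ => q ^ ∑ i, m i := by
  simpa only [Finset.prod_pow_eq_pow_sum] using
    summable_pi_prod_of_nonneg (ι := ι) (f := fun _ n => q ^ n) (fun _ n => pow_nonneg hq0 n)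
      fun _ => summable_geometric_of_lt_one hq0 hq1

theorem sum_pi_fin_eq_sum_piFinset_range [DecidableEq ι] {E : Type*} [AddCommMonoid E]
    (D : ℕ) (F : (ι → ℕ) → E) :
    ∑ i : ι → Fin D, F (fun l => i l) =
      ∑ i ∈ Fintype.piFinset fun _ => Finset.range D, F i := by
  refine Finset.sum_bij (fun i _ l => (i l : ℕ)) (fun i _ => by simp)
    (fun i _ k _ hik => funext fun l => Fin.ext (congrFun hik l)) (fun i hi => ?_)
    fun _ _ => rfl
  have hlt : ∀ l, i l < D := by simpa using hi
  exact ⟨fun l => ⟨i l, hlt l⟩, Finset.mem_univ _, rfl⟩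

theorem tsum_pi_nat_eq_tsum_sum_mul_add [DecidableEq ι] {E : Type*} [AddCommMonoid E]
    [TopologicalSpace E] [ContinuousAdd E] [T3Space E] {D : ℕ} (hD : D ≠ 0)
    {F : (ι → ℕ) → E} (hF : Summable F) :
    ∑' m, F m = ∑' n : ι → ℕ, ∑ i ∈ Fintype.piFinset fun _ => Finset.range D,
      F fun l => n l * D + i l := by
  have : NeZero D := ⟨hD⟩
  let e : (ι → ℕ) × (ι → Fin D) ≃ (ι → ℕ) :=
    ((Equiv.piCongrRight fun _ => Nat.divModEquiv D).trans
      (Equiv.arrowProdEquivProdArrow ι (fun _ => ℕ) fun _ => Fin D)).symm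
  calc ∑' m, F m = ∑' p, F (e p) := (e.tsum_eq F).symm
    _ = ∑' n, ∑' i, F (e (n, i)) :=
        (e.summable_iff.2 hF).tsum_prod' fun _ => (hasSum_fintype _).summable
    _ = _ := tsum_congr fun n => (tsum_fintype _).trans
        (sum_pi_fin_eq_sum_piFinset_range D fun i => F fun l => n l * D + i l)

end Summation

section QNumber

variable {q : ℝ}

theorem qNum_pos (hq0 : 0 ≤ q) (hq1 : q < 1) {x : ℝ} (hx : 0 < x) : 0 < qNum q x :=
  div_pos (sub_pos.2 (Real.rpow_lt_one hq0 hq1 hx)) (sub_pos.2 hq1)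

theorem qNum_monotone (hq0 : 0 < q) (hq1 : q < 1) : Monotone (qNum q) := fun _ _ hxy =>
  div_le_div_of_nonneg_right
    (sub_le_sub_left (Real.rpow_le_rpow_of_exponent_ge hq0 hq1.le hxy) 1) (sub_pos.2 hq1).le

theorem qNum_le_one_div (hq0 : 0 ≤ q) (hq1 : q < 1) (x : ℝ) : qNum q x ≤ 1 / (1 - q) :=
  div_le_div_of_nonneg_right (sub_le_self 1 (Real.rpow_nonneg hq0 x)) (sub_pos.2 hq1).le

theorem qNum_mul (hq0 : 0 ≤ q) {a : ℝ} (hqa : q ^ a ≠ 1) (y : ℝ) :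
    qNum q (a * y) = qNum q a * qNum (q ^ a) y := by
  rw [qNum, qNum, qNum, Real.rpow_mul hq0, mul_comm, div_mul_div_cancel₀ (sub_ne_zero.2 hqa.symm)]

theorem qNum_rpow_cpow_neg (hq0 : 0 ≤ q) (hq1 : q < 1) {a y : ℝ} (ha : 0 < a) (hy : 0 < y)
    (s : ℂ) :
    (qNum (q ^ a) y : ℂ) ^ (-s) = (qNum q a : ℂ) ^ s * (qNum q (a * y) : ℂ) ^ (-s) := by
  have hqa : q ^ a < 1 := Real.rpow_lt_one hq0 hq1 ha
  have ha_pos : 0 < qNum q a := qNum_pos hq0 hq1 ha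
  have hy_pos : 0 < qNum (q ^ a) y := qNum_pos (Real.rpow_nonneg hq0 a) hqa hy
  have ha_cpow : (qNum q a : ℂ) ^ s ≠ 0 :=
    Complex.cpow_ne_zero_iff.2 (Or.inl (Complex.ofReal_ne_zero.2 ha_pos.ne'))
  rw [qNum_mul hq0 hqa.ne, Complex.ofReal_mul,
    Complex.mul_cpow_ofReal_nonneg ha_pos.le hy_pos.le, Complex.cpow_neg (qNum q a : ℂ),
    mul_inv_cancel_left₀ ha_cpow]

theorem exists_norm_qNum_cpow_le (hq0 : 0 < q) (hq1 : q < 1) {x : ℝ} (hx : 0 < x) (s : ℂ) :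
    ∃ C : ℝ, ∀ y, x ≤ y → ‖(qNum q y : ℂ) ^ s‖ ≤ C := by
  have hx_pos : 0 < qNum q x := qNum_pos hq0.le hq1 hx
  have hcont : ContinuousOn (fun t : ℝ => t ^ s.re) (Set.Icc (qNum q x) (1 / (1 - q))) :=
    fun t ht => (Real.continuousAt_rpow_const t _
      (Or.inl (hx_pos.trans_le ht.1).ne')).continuousWithinAt
  obtain ⟨C, hC⟩ := isCompact_Icc.exists_bound_of_continuousOn hcont
  refine ⟨C, fun y hxy => ?_⟩
  rw [Complex.norm_cpow_eq_rpow_re_of_pos (qNum_pos hq0.le hq1 (hx.trans_le hxy))]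
  exact (le_abs_self _).trans
    (hC _ ⟨qNum_monotone hq0 hq1 hxy, qNum_le_one_div hq0.le hq1 y⟩)

end QNumber

section Series

variable {ι : Type*} [Fintype ι] {d : ℕ}

/-- The term of index `m` in the series defining `qL`, without the normalizing factor `[2]_q ^ r`.
The indices are families over an arbitrary finite type rather than `Fin r`. -/
noncomputable def qLTerm (q : ℝ) (χ : DirichletCharacter ℂ d) (s : ℂ) (x : ℝ) (m : ι → ℕ) : ℂ :=
  (-(q : ℂ)) ^ (∑ l, m l) * (∏ l, χ (m l : ZMod d)) *
    (qNum q ((∑ l, m l : ℕ) + x) : ℂ) ^ (-s)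

theorem qL_eq_mul_tsum_qLTerm (q : ℝ) (r : ℕ) (χ : DirichletCharacter ℂ d) (s : ℂ) (x : ℝ) :
    qL q r χ s x = (qNum q 2 : ℂ) ^ r * ∑' m : Fin r → ℕ, qLTerm q χ s x m :=
  rfl

theorem norm_qLTerm_le {q : ℝ} (hq0 : 0 ≤ q) (χ : DirichletCharacter ℂ d) (s : ℂ) (x : ℝ)
    (m : ι → ℕ) :
    ‖qLTerm q χ s x m‖ ≤
      q ^ (∑ l, m l) * ‖(qNum q ((∑ l, m l : ℕ) + x) : ℂ) ^ (-s)‖ := by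
  have hχ : ‖∏ l, χ (m l : ZMod d)‖ ≤ 1 := by
    rw [norm_prod]
    exact Finset.prod_le_one (fun _ _ => norm_nonneg _) fun _ _ => χ.norm_le_one _
  rw [qLTerm, norm_mul, norm_mul, norm_pow, norm_neg, Complex.norm_real,
    Real.norm_of_nonneg hq0]
  gcongr
  exact mul_le_of_le_one_right (pow_nonneg hq0 _) hχ

theorem summable_qLTerm {q : ℝ} (hq0 : 0 < q) (hq1 : q < 1) (χ : DirichletCharacter ℂ d) (s : ℂ)
    {x : ℝ} (hx : 0 < x) : Summable fun m : ι → ℕ => qLTerm q χ s x m := by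
  obtain ⟨C, hC⟩ := exists_norm_qNum_cpow_le hq0 hq1 hx (-s)
  refine .of_norm_bounded ((summable_pow_sum hq0.le hq1).mul_right C) fun m => ?_
  refine (norm_qLTerm_le hq0.le χ s x m).trans ?_
  gcongr
  exact hC _ (le_add_of_nonneg_left (Nat.cast_nonneg _))

theorem qLTerm_mul_add {D : ℕ} (hD : Odd D) (hdD : d ∣ D) (q : ℝ) (χ : DirichletCharacter ℂ d)
    (s : ℂ) (x : ℝ) (n i : ι → ℕ) :
    qLTerm q χ s x (fun l => n l * D + i l) =
      (-1) ^ (∑ l, (i l + n l)) * (q : ℂ) ^ (∑ l, (n l * D + i l)) * (∏ l, χ (i l : ZMod d)) *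
        (qNum q ((∑ l, (n l * D + i l) : ℕ) + x) : ℂ) ^ (-s) := by
  have hχ : ∀ l, χ ((n l * D + i l : ℕ) : ZMod d) = χ (i l : ZMod d) := fun l => by
    rw [Nat.cast_add, Nat.cast_mul, (ZMod.natCast_eq_zero_iff D d).2 hdD, mul_zero, zero_add]
  have hsign : (-1 : ℂ) ^ (∑ l, (n l * D + i l)) = (-1) ^ ∑ l, (i l + n l) := by
    simp only [← Finset.prod_pow_eq_pow_sum, pow_add, pow_mul', hD.neg_one_pow,
      add_comm (i _) (n _)]
  simp only [qLTerm, hχ, neg_pow (q : ℂ), hsign]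

end Series

theorem qL_distribution_general {a q x y : ℝ} (ha : 0 < a) (hq0 : 0 < q) (hq1 : q < 1)
    (hxy : 0 < a * x + y) {b d : ℕ} (hb : Odd b) (hd : Odd d) (χ : DirichletCharacter ℂ d)
    (s : ℂ) (r : ℕ) :
    (1 / (qNum (q ^ a) 2 : ℂ) ^ r) * qL (q ^ a) r χ s (b * x + (b / a) * y) =
      (qNum q a : ℂ) ^ s *
        ∑' m : Fin r → ℕ, ∑ i ∈ Fintype.piFinset (fun _ : Fin r => Finset.range (d * b)),
          ((-1 : ℂ) ^ (∑ l, (i l + m l)) * ((q ^ a : ℝ) : ℂ) ^ (∑ l, (i l + b * d * m l)) *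
            (∏ l, χ (i l : ZMod d)) *
            (qNum q (a * b * (x + d * ∑ l, (m l : ℝ)) + b * y +
              a * ∑ l, (i l : ℝ)) : ℂ) ^ (-s)) := by
  have hQ0 : 0 < q ^ a := Real.rpow_pos_of_pos hq0 a
  have hQ1 : q ^ a < 1 := Real.rpow_lt_one hq0.le hq1 ha
  have hb_pos : (0 : ℝ) < b := Nat.cast_pos.2 hb.pos
  have hX : 0 < b * x + (b / a) * y := by
    rw [show b * x + (b / a) * y = b / a * (a * x + y) by field_simp]
    positivity
  have htwo_ne_zero : (qNum (q ^ a) 2 : ℂ) ^ r ≠ 0 :=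
    pow_ne_zero _ (Complex.ofReal_ne_zero.2 (qNum_pos hQ0.le hQ1 two_pos).ne')
  have hD : Odd (d * b) := hd.mul hb
  rw [qL_eq_mul_tsum_qLTerm, one_div, inv_mul_cancel_left₀ htwo_ne_zero,
    tsum_pi_nat_eq_tsum_sum_mul_add hD.pos.ne' (summable_qLTerm hQ0 hQ1 χ s hX), ← tsum_mul_left]
  refine tsum_congr fun m => ?_
  rw [Finset.mul_sum]
  refine Finset.sum_congr rfl fun i _ => ?_
  have hexp : ∑ l, (m l * (d * b) + i l) = ∑ l, (i l + b * d * m l) :=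
    Finset.sum_congr rfl fun l _ => by ring
  have harg : a * ((∑ l, (i l + b * d * m l) : ℕ) + (b * x + (b / a) * y)) =
      a * b * (x + d * ∑ l, (m l : ℝ)) + b * y + a * ∑ l, (i l : ℝ) := by
    push_cast [Finset.sum_add_distrib, ← Finset.mul_sum]
    field_simp
    ring
  rw [qLTerm_mul_add hD (dvd_mul_right d b), hexp,
    qNum_rpow_cpow_neg hq0.le hq1 ha (by positivity), harg]
  ring

/-- Equation (6): distribution-type expansion of the multiple `q`-`l`-function. -/
theorem qL_distribution (a b : ℕ) (ha0 : 0 < a) (ha : Odd a) (hb0 : 0 < b) (hb : Odd b)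
    (q : ℝ) (hq0 : 0 < q) (hq1 : q < 1) (x : ℝ) (hx : 0 < x) (s : ℂ)
    (r : ℕ) (hr : 0 < r) (d : ℕ) (hd : Odd d) (χ : DirichletCharacter ℂ d)
    (j : Fin r → ℕ) :
    (1 / ((qNum (q ^ a) 2 : ℝ) : ℂ) ^ r) *
      qL (q ^ a) r χ s (b * x + ((b : ℝ) / a) * (∑ l, j l)) =
    ((qNum q a : ℝ) : ℂ) ^ s *
      ∑' m : Fin r → ℕ,
        ∑ i ∈ Fintype.piFinset (fun _ : Fin r => Finset.range (d * b)),
          ((-1 : ℂ) ^ (∑ l, (i l + m l)) * (q : ℂ) ^ (a * ∑ l, (i l + b * d * m l)) *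
            (∏ l, χ ((i l : ZMod d))) *
            ((qNum q ((a : ℝ) * b * (x + (d : ℝ) * ∑ l, m l) + (b : ℝ) * ∑ l, j l +
              (a : ℝ) * ∑ l, i l) : ℝ) : ℂ) ^ (-s)) := by
  simpa only [Real.rpow_natCast, Complex.ofReal_pow, ← pow_mul, Nat.cast_sum] using
    qL_distribution_general (Nat.cast_pos.2 ha0) hq0 hq1
      (show 0 < (a : ℝ) * x + ∑ l, (j l : ℝ) by positivity) hb hd χ s r
end
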